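/- arXiv:1410.1610 — 4 statements merged into one kernel-verified Lean document; each statement's English description precedes it below -/
import Mathlib

section
/- Let I and J denote the 2×2 identity and all-ones matrices, 0 the 2×2 zero matrix, and w = J − I. Let k ≥ 1 and m ≥ 0. For each 1 ≤ i ≤ k, let Bᵢ be one of the five 4×4 matrices given in 2×2 block form by [[0,0],[0,0]], [[0,I],[I,w]], [[0,J],[J,0]], [[w,0],[0,w]], [[w,J],[J,w]]. For each 1 ≤ i < j ≤ k, let B_{ij} be one of the sixteen 4×4 matrices given in 2×2 block form by [[0,0],[0,0]], [[J,J],[J,J]], [[0,J],[J,0]], [[J,0],[0,J]], [[I,0],[0,I]], [[w,0],[0,w]], [[0,I],[w,0]], [[0,w],[I,0]], [[I,J],[J,I]], [[w,J],[J,w]], [[J,w],[I,J]], [[J,I],[w,J]], [[I,I],[w,I]], [[I,w],[I,I]], [[w,I],[w,w]], [[w,w],[I,w]]. Let C be any m×m symmetric 0-1 matrix with zero diagonal, and for each i let Nᵢ be a 4×m matrix each of whose columns is either all zeros or all ones. Let A₁ be the (4k+m)×(4k+m) symmetric matrix whose diagonal blocks are B₁, …, B_k, C, whose (i,j) block for i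 < j is B_{ij} (and (j,i) block its transpose), and whose (i, k+1) block is Nᵢ (and (k+1, i) block its transpose); let A₂ be the analogous matrix in which the (i,j) block for i < j is the transpose of B_{ij} (and the (j,i) block is B_{ij}), with the same diagonal blocks and the same Nᵢ blocks. Let D be the diagonal matrix whose diagonal entries are the row sums of A₁ (which equal the row sums of A₂). Then for all real λ, x, y: det(λ·Id − A₁ + x·D + y·J') = det(λ·Id − A₂ + x·D + y·J'), where Id and J' are the (4k+m)×(4k+m) identity and all-ones matrices. -/
/-!
Write every `4 × 4` block as a `2 × 2` matrix over the commutative algebra `ℝ[w]`, `w² = 1`, and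
split `ℝ⁴` into the eigenspaces `w = 1` and `w = -1`. On the `w = 1` part all the blocks
`B_{ij}` become symmetric, so transposing them changes nothing there. On the `w = -1` part `J`
vanishes, each `B_{ij}` becomes `a + b R` with `R` the rotation by a quarter turn, and each diagonal
block of `l - A₁ + x D + y J` becomes a scalar matrix, possibly plus a multiple of the single
traceless symmetric matrix `T = [[x + 1, 2], [2, -(x + 1)]]`: the row sums within a block differ
only through `[[0, I], [I, w]]`, where they are `c, c, c + 1, c + 1`. Since `T R = -R T` and
`T² = (x + 1)² + 4 ≠ 0`, conjugation by `T` transposes the off-diagonal blocks and fixes the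
diagonal ones.

Hence the invertible matrix `bigP k m x`, equal to the identity on the `w = 1` part of each block and
on the last `m` coordinates, and to `T` on the `w = -1` part of each block, intertwines the two
matrices (`P4_mul_off`, `P4_mul_diag`, `P4_row_sum`), and their determinants agree.
-/

open Matrix

noncomputable section

/-- The `2 × 2` all-ones matrix `J`. -/
def J2 : Matrix (Fin 2) (Fin 2) ℝ := Matrix.of fun _ _ => 1

/-- The matrix `w = J - I` (`2 × 2`). -/
def W2 : Matrix (Fin 2) (Fin 2) ℝ := J2 - 1

/-- Assemble a `4 × 4` matrix from four `2 × 2` blocks. -/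
def blk4 (P Q R S : Matrix (Fin 2) (Fin 2) ℝ) : Matrix (Fin 4) (Fin 4) ℝ :=
  Matrix.reindex finSumFinEquiv finSumFinEquiv (Matrix.fromBlocks P Q R S)

/-- The five allowed diagonal blocks `Bᵢ`. -/
def diagChoices : Set (Matrix (Fin 4) (Fin 4) ℝ) :=
  {blk4 0 0 0 0, blk4 0 1 1 W2, blk4 0 J2 J2 0, blk4 W2 0 0 W2, blk4 W2 J2 J2 W2}

/-- The sixteen allowed off-diagonal blocks `B_{ij}`. -/
def offChoices : Set (Matrix (Fin 4) (Fin 4) ℝ) :=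
  {blk4 0 0 0 0, blk4 J2 J2 J2 J2, blk4 0 J2 J2 0, blk4 J2 0 0 J2,
   blk4 1 0 0 1, blk4 W2 0 0 W2, blk4 0 1 W2 0, blk4 0 W2 1 0,
   blk4 1 J2 J2 1, blk4 W2 J2 J2 W2, blk4 J2 W2 1 J2, blk4 J2 1 W2 J2,
   blk4 1 1 W2 1, blk4 1 W2 1 1, blk4 W2 1 W2 W2, blk4 W2 W2 1 W2}

/-- The matrix `A₁` (for `flip = false`) resp. `A₂` (for `flip = true`) of the
construction: diagonal blocks `Bd i` and `C`, off-diagonal blocks `Boff i j` for `i < j`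
(transposed when `flip = true`), and connection blocks `N i`. -/
def conA (k m : ℕ) (Bd : Fin k → Matrix (Fin 4) (Fin 4) ℝ)
    (Boff : Fin k → Fin k → Matrix (Fin 4) (Fin 4) ℝ)
    (C : Matrix (Fin m) (Fin m) ℝ) (N : Fin k → Matrix (Fin 4) (Fin m) ℝ)
    (flip : Bool) : Matrix ((Fin k × Fin 4) ⊕ Fin m) ((Fin k × Fin 4) ⊕ Fin m) ℝ :=
  Matrix.of fun p q =>
    match p, q with
    | Sum.inl (i, a), Sum.inl (j, c) =>
        if i = j then Bd i a c
        else if i < j then (if flip then Boff i j c a else Boff i j a c)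
        else (if flip then Boff j i a c else Boff j i c a)
    | Sum.inl (i, a), Sum.inr w => N i a w
    | Sum.inr w, Sum.inl (i, a) => N i a w
    | Sum.inr w, Sum.inr w' => C w w'

/-- The `4 × 4` symmetric matrix that acts as the identity on the eigenspace `w = 1`, and as
`[[x + 1, 2], [2, -(x + 1)]]` on the eigenspace `w = -1`. -/
def P4 (x : ℝ) : Matrix (Fin 4) (Fin 4) ℝ :=
  !![(x + 2) / 2, -x / 2, 1, -1;
     -x / 2, (x + 2) / 2, -1, 1;
     1, -1, -x / 2, (x + 2) / 2;
     -1, 1, (x + 2) / 2, -x / 2]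

/-- The inverse of `P4 x`: the same matrix with `T` replaced by `T⁻¹ = T / ((x + 1)² + 4)` on the
eigenspace `w = -1`. -/
def P4inv (x : ℝ) : Matrix (Fin 4) (Fin 4) ℝ :=
  Matrix.of fun a b => (P4 x a b + (((x + 1) ^ 2 + 4) - 1) * blk4 J2 0 0 J2 a b / 2) /
    ((x + 1) ^ 2 + 4)

lemma blk4_eq (P Q R S : Matrix (Fin 2) (Fin 2) ℝ) :
    blk4 P Q R S = !![P 0 0, P 0 1, Q 0 0, Q 0 1; P 1 0, P 1 1, Q 1 0, Q 1 1;
      R 0 0, R 0 1, S 0 0, S 0 1; R 1 0, R 1 1, S 1 0, S 1 1] := by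
  ext a b
  fin_cases a <;> fin_cases b <;> rfl

lemma P4_symm (x : ℝ) (a b : Fin 4) : P4 x a b = P4 x b a := by
  fin_cases a <;> fin_cases b <;> simp [P4]

lemma P4_row_sum (x : ℝ) (a : Fin 4) : ∑ b, P4 x a b = 1 := by
  fin_cases a <;> simp [P4, Fin.sum_univ_four] <;> ring

lemma P4_col_sum (x : ℝ) (c : Fin 4) : ∑ b, P4 x b c = 1 := by
  rw [← P4_row_sum x c]
  exact Finset.sum_congr rfl fun b _ => P4_symm x b c

lemma P4_mul_inv (x : ℝ) : P4 x * P4inv x = 1 := by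
  have h : (x + 1) ^ 2 + 4 ≠ 0 := by positivity
  ext a c
  fin_cases a <;> fin_cases c <;>
    simp [P4, P4inv, Matrix.mul_apply, Fin.sum_univ_four, blk4_eq, J2] <;> field_simp <;> ring

/-- The `4 × 4` matrix acting as `2 * [[p, q], [q, p]]` on the eigenspace `w = 1` and as
`2 * [[a, b], [-b, a]]` on the eigenspace `w = -1`. -/
def offForm (p q a b : ℝ) : Matrix (Fin 4) (Fin 4) ℝ :=
  !![p + a, p - a, q + b, q - b;
     p - a, p + a, q - b, q + b;
     q - b, q + b, p + a, p - a;
     q + b, q - b, p - a, p + a]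

lemma exists_offForm {B : Matrix (Fin 4) (Fin 4) ℝ} (hB : B ∈ offChoices) :
    ∃ p q a b, B = offForm p q a b := by
  simp only [offChoices, Set.mem_insert_iff, Set.mem_singleton_iff] at hB
  -- The block `J` has coordinates `(1, 0)` in `(p, a)` or `(q, b)`, while `I` and `w` have
  -- `(1 / 2, 1 / 2)` and `(1 / 2, -1 / 2)`.
  rcases hB with rfl | rfl | rfl | rfl | rfl | rfl | rfl | rfl | rfl | rfl | rfl | rfl | rfl |
    rfl | rfl | rfl
  · refine ⟨0, 0, 0, 0, ?_⟩
    ext i j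
    fin_cases i <;> fin_cases j <;> simp [blk4_eq, offForm, J2, W2] <;> norm_num
  · refine ⟨1, 1, 0, 0, ?_⟩
    ext i j
    fin_cases i <;> fin_cases j <;> simp [blk4_eq, offForm, J2, W2] <;> norm_num
  · refine ⟨0, 1, 0, 0, ?_⟩
    ext i j
    fin_cases i <;> fin_cases j <;> simp [blk4_eq, offForm, J2, W2] <;> norm_num
  · refine ⟨1, 0, 0, 0, ?_⟩
    ext i j
    fin_cases i <;> fin_cases j <;> simp [blk4_eq, offForm, J2, W2] <;> norm_num
  · refine ⟨1 / 2, 0, 1 / 2, 0, ?_⟩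
    ext i j
    fin_cases i <;> fin_cases j <;> simp [blk4_eq, offForm, J2, W2] <;> norm_num
  · refine ⟨1 / 2, 0, -1 / 2, 0, ?_⟩
    ext i j
    fin_cases i <;> fin_cases j <;> simp [blk4_eq, offForm, J2, W2] <;> norm_num
  · refine ⟨0, 1 / 2, 0, 1 / 2, ?_⟩
    ext i j
    fin_cases i <;> fin_cases j <;> simp [blk4_eq, offForm, J2, W2] <;> norm_num
  · refine ⟨0, 1 / 2, 0, -1 / 2, ?_⟩
    ext i j
    fin_cases i <;> fin_cases j <;> simp [blk4_eq, offForm, J2, W2] <;> norm_num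
  · refine ⟨1 / 2, 1, 1 / 2, 0, ?_⟩
    ext i j
    fin_cases i <;> fin_cases j <;> simp [blk4_eq, offForm, J2, W2] <;> norm_num
  · refine ⟨1 / 2, 1, -1 / 2, 0, ?_⟩
    ext i j
    fin_cases i <;> fin_cases j <;> simp [blk4_eq, offForm, J2, W2] <;> norm_num
  · refine ⟨1, 1 / 2, 0, -1 / 2, ?_⟩
    ext i j
    fin_cases i <;> fin_cases j <;> simp [blk4_eq, offForm, J2, W2] <;> norm_num
  · refine ⟨1, 1 / 2, 0, 1 / 2, ?_⟩
    ext i j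
    fin_cases i <;> fin_cases j <;> simp [blk4_eq, offForm, J2, W2] <;> norm_num
  · refine ⟨1 / 2, 1 / 2, 1 / 2, 1 / 2, ?_⟩
    ext i j
    fin_cases i <;> fin_cases j <;> simp [blk4_eq, offForm, J2, W2] <;> norm_num
  · refine ⟨1 / 2, 1 / 2, 1 / 2, -1 / 2, ?_⟩
    ext i j
    fin_cases i <;> fin_cases j <;> simp [blk4_eq, offForm, J2, W2] <;> norm_num
  · refine ⟨1 / 2, 1 / 2, -1 / 2, 1 / 2, ?_⟩
    ext i j
    fin_cases i <;> fin_cases j <;> simp [blk4_eq, offForm, J2, W2] <;> norm_num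
  · refine ⟨1 / 2, 1 / 2, -1 / 2, -1 / 2, ?_⟩
    ext i j
    fin_cases i <;> fin_cases j <;> simp [blk4_eq, offForm, J2, W2] <;> norm_num

lemma offForm_transpose (p q a b : ℝ) (i j : Fin 4) :
    offForm p q a b i j = offForm p q a (-b) j i := by
  fin_cases i <;> fin_cases j <;> simp [offForm] <;> ring

/-- On the eigenspace `w = -1` this is `T R = -R T` for the quarter-turn rotation `R`; on `w = 1`
`P4 x` is the identity. -/
lemma P4_mul_offForm (x p q a b : ℝ) : P4 x * offForm p q a b = offForm p q a (-b) * P4 x := by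
  ext i j
  fin_cases i <;> fin_cases j <;>
    simp [P4, offForm, Matrix.mul_apply, Fin.sum_univ_four] <;> ring

lemma P4_mul_off (x : ℝ) {B : Matrix (Fin 4) (Fin 4) ℝ} (hB : B ∈ offChoices) (a c : Fin 4) :
    ∑ b, P4 x a b * B b c = ∑ b, B b a * P4 x b c := by
  obtain ⟨p, q, s, t, rfl⟩ := exists_offForm hB
  have h := congrFun (congrFun (P4_mul_offForm x p q s t) a) c
  simpa only [Matrix.mul_apply, ← offForm_transpose] using h

lemma P4_mul_off_transpose (x : ℝ) {B : Matrix (Fin 4) (Fin 4) ℝ} (hB : B ∈ offChoices)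
    (a c : Fin 4) : ∑ b, P4 x a b * B c b = ∑ b, B a b * P4 x b c := by
  obtain ⟨p, q, s, t, rfl⟩ := exists_offForm hB
  have h := congrFun (congrFun (P4_mul_offForm x p q s (-t)) a) c
  rw [neg_neg] at h
  simpa only [Matrix.mul_apply, ← offForm_transpose] using h

/-- All row and column sums of an off-diagonal block agree, so such a block contributes a constant
to the entries of `D` belonging to one diagonal block. -/
lemma off_sums {B : Matrix (Fin 4) (Fin 4) ℝ} (hB : B ∈ offChoices) (a : Fin 4) :
    ∑ c, B a c = ∑ c, B 0 c ∧ ∑ c, B c a = ∑ c, B c 0 := by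
  obtain ⟨p, q, s, t, rfl⟩ := exists_offForm hB
  constructor <;> fin_cases a <;> simp [Fin.sum_univ_four, offForm] <;> ring

lemma P4_mul_diag (x : ℝ) {B : Matrix (Fin 4) (Fin 4) ℝ} (hB : B ∈ diagChoices) (a c : Fin 4) :
    ∑ b, P4 x a b * ((if b = c then x * ∑ d, B b d else 0) - B b c) =
      ∑ b, ((if a = b then x * ∑ d, B a d else 0) - B a b) * P4 x b c := by
  simp only [diagChoices, Set.mem_insert_iff, Set.mem_singleton_iff] at hB
  rcases hB with rfl | rfl | rfl | rfl | rfl <;> fin_cases a <;> fin_cases c <;>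
    simp [P4, Fin.sum_univ_four, blk4_eq, J2, W2] <;> ring

/-- The block diagonal matrix with `k` copies of `P4 x` followed by the `m × m` identity. -/
def bigP (k m : ℕ) (x : ℝ) : Matrix ((Fin k × Fin 4) ⊕ Fin m) ((Fin k × Fin 4) ⊕ Fin m) ℝ :=
  Matrix.fromBlocks (Matrix.kroneckerMap (· * ·) (1 : Matrix (Fin k) (Fin k) ℝ) (P4 x)) 0 0 1

lemma bigP_det_ne (k m : ℕ) (x : ℝ) : (bigP k m x).det ≠ 0 := by
  have h : (P4 x).det ≠ 0 := by
    intro h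
    have := congrArg Matrix.det (P4_mul_inv x)
    simp [h] at this
  simpa [bigP, Matrix.det_fromBlocks_zero₂₁, Matrix.det_kronecker] using fun h' => absurd h' h

section bigP_mul

variable {k m : ℕ} (x : ℝ)
  (M : Matrix ((Fin k × Fin 4) ⊕ Fin m) ((Fin k × Fin 4) ⊕ Fin m) ℝ)

lemma bigP_mul_inl (i : Fin k) (a : Fin 4) (q) :
    (bigP k m x * M) (Sum.inl (i, a)) q = ∑ b, P4 x a b * M (Sum.inl (i, b)) q := by
  simp [bigP, Matrix.mul_apply, Fintype.sum_sum_type, Fintype.sum_prod_type, Matrix.one_apply,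
    ite_mul]


lemma bigP_mul_inr (v : Fin m) (q) :
    (bigP k m x * M) (Sum.inr v) q = M (Sum.inr v) q := by
  simp [bigP, Matrix.mul_apply, Fintype.sum_sum_type, Matrix.one_apply]

lemma mul_bigP_inl (p) (j : Fin k) (c : Fin 4) :
    (M * bigP k m x) p (Sum.inl (j, c)) = ∑ b, M p (Sum.inl (j, b)) * P4 x b c := by
  simp [bigP, Matrix.mul_apply, Fintype.sum_sum_type, Fintype.sum_prod_type, Matrix.one_apply,
    ite_mul]


lemma mul_bigP_inr (p) (v : Fin m) :
    (M * bigP k m x) p (Sum.inr v) = M p (Sum.inr v) := by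
  simp [bigP, Matrix.mul_apply, Fintype.sum_sum_type, Matrix.one_apply]

end bigP_mul

/-- Within the `i`-th block, the row sums of `A₁` are those of `Bd i` up to a common constant. -/
lemma row_sum_inl (k m : ℕ) (Bd : Fin k → Matrix (Fin 4) (Fin 4) ℝ)
    (Boff : Fin k → Fin k → Matrix (Fin 4) (Fin 4) ℝ)
    (hBoff : ∀ i j, i < j → Boff i j ∈ offChoices)
    (C : Matrix (Fin m) (Fin m) ℝ)
    (N : Fin k → Matrix (Fin 4) (Fin m) ℝ) (hN : ∀ i v a, N i a v = N i 0 v) (i : Fin k) :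
    ∃ r : ℝ, ∀ a, ∑ q, conA k m Bd Boff C N false (Sum.inl (i, a)) q = r + ∑ c, Bd i a c := by
  refine ⟨∑ q, conA k m Bd Boff C N false (Sum.inl (i, 0)) q - ∑ c, Bd i 0 c, fun a => ?_⟩
  simp only [Fintype.sum_sum_type, Fintype.sum_prod_type]
  have hNa : ∑ v, conA k m Bd Boff C N false (Sum.inl (i, a)) (Sum.inr v) =
      ∑ v, conA k m Bd Boff C N false (Sum.inl (i, 0)) (Sum.inr v) :=
    Finset.sum_congr rfl fun v _ => hN i v a
  have key : ∑ j, (∑ c, conA k m Bd Boff C N false (Sum.inl (i, a)) (Sum.inl (j, c)) -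
      ∑ c, conA k m Bd Boff C N false (Sum.inl (i, 0)) (Sum.inl (j, c))) =
      ∑ c, Bd i a c - ∑ c, Bd i 0 c := by
    rw [Finset.sum_eq_single i]
    · simp [conA]
    · intro j _ hj
      rcases lt_or_gt_of_ne hj with h | h
      · simp only [conA, Matrix.of_apply, if_neg hj.symm, if_neg h.not_gt]
        simpa [sub_eq_zero] using (off_sums (hBoff _ _ h) a).2
      · simp only [conA, Matrix.of_apply, if_neg hj.symm, if_pos h]
        simpa [sub_eq_zero] using (off_sums (hBoff _ _ h) a).1
    · simp
  rw [Finset.sum_sub_distrib] at key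
  linarith

/-- The construction: with diagonal blocks from `diagChoices`,
off-diagonal blocks from `offChoices`, any adjacency matrix `C`, and connection blocks
`N i` all of whose columns are constant `0` or `1`, the matrices `A₁` and `A₂` satisfy
`det (l•I - A₁ + x•D + y•J) = det (l•I - A₂ + x•D + y•J)` for all real `l, x, y`, where
`D` is the diagonal matrix of row sums of `A₁`. -/
theorem stmt_15 (k m : ℕ) (hk : 1 ≤ k)
    (Bd : Fin k → Matrix (Fin 4) (Fin 4) ℝ) (hBd : ∀ i, Bd i ∈ diagChoices)
    (Boff : Fin k → Fin k → Matrix (Fin 4) (Fin 4) ℝ)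
    (hBoff : ∀ i j, i < j → Boff i j ∈ offChoices)
    (C : Matrix (Fin m) (Fin m) ℝ) (hCsymm : C.IsSymm)
    (hCdiag : ∀ w, C w w = 0) (hC01 : ∀ w w', C w w' = 0 ∨ C w w' = 1)
    (N : Fin k → Matrix (Fin 4) (Fin m) ℝ)
    (hN : ∀ i w, (∀ a, N i a w = 0) ∨ (∀ a, N i a w = 1))
    (D : Matrix ((Fin k × Fin 4) ⊕ Fin m) ((Fin k × Fin 4) ⊕ Fin m) ℝ)
    (hD : D = Matrix.diagonal fun p => ∑ q, conA k m Bd Boff C N false p q) :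
    ∀ l x y : ℝ,
      (l • (1 : Matrix ((Fin k × Fin 4) ⊕ Fin m) ((Fin k × Fin 4) ⊕ Fin m) ℝ) -
          conA k m Bd Boff C N false + x • D +
          y • (Matrix.of fun _ _ => (1 : ℝ))).det =
      (l • (1 : Matrix ((Fin k × Fin 4) ⊕ Fin m) ((Fin k × Fin 4) ⊕ Fin m) ℝ) -
          conA k m Bd Boff C N true + x • D +
          y • (Matrix.of fun _ _ => (1 : ℝ))).det := by
  intro l x y
  have hN' : ∀ i v a, N i a v = N i 0 v := by
    intro i v a
    rcases hN i v with h | h <;> simp [h]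
  choose r hr using row_sum_inl k m Bd Boff hBoff C N hN'
  have hdet : ∀ P M₁ M₂ : Matrix ((Fin k × Fin 4) ⊕ Fin m) ((Fin k × Fin 4) ⊕ Fin m) ℝ,
      P.det ≠ 0 → P * M₁ = M₂ * P → M₁.det = M₂.det := by
    intro P M₁ M₂ hP h
    have := congrArg Matrix.det h
    rw [Matrix.det_mul, Matrix.det_mul, mul_comm] at this
    exact mul_right_cancel₀ hP this
  refine hdet (bigP k m x) _ _ (bigP_det_ne k m x) ?_
  subst hD
  ext p q
  rcases p with ⟨i, a⟩ | v <;> rcases q with ⟨j, c⟩ | v'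
  · rw [bigP_mul_inl, mul_bigP_inl]
    simp only [Matrix.add_apply, Matrix.sub_apply, Matrix.smul_apply, Matrix.one_apply,
      Matrix.diagonal_apply, Matrix.of_apply, Sum.inl.injEq, Prod.mk.injEq, smul_eq_mul, hr]
    rcases lt_trichotomy i j with h | rfl | h
    · have e := P4_mul_off x (hBoff _ _ h) a c
      simp only [conA, Matrix.of_apply, h.ne, h, false_and, if_true, if_false, mul_zero, zero_sub,
        add_zero, mul_add, add_mul, mul_neg, neg_mul, Finset.sum_add_distrib,
        Finset.sum_neg_distrib, Bool.false_eq_true]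
      rw [e, ← Finset.sum_mul, ← Finset.mul_sum, P4_row_sum, P4_col_sum]
      ring
    · have e := P4_mul_diag x (hBd i) a c
      -- The scalar part `l + x r i` and the all-ones part `y J` commute with `P4 x` separately.
      have eL : ∀ b, P4 x a b * (l * (if i = i ∧ b = c then 1 else 0) -
          conA k m Bd Boff C N false (Sum.inl (i, b)) (Sum.inl (i, c)) +
          x * (if i = i ∧ b = c then r i + ∑ d, Bd i b d else 0) + y * 1) =
          (if b = c then P4 x a b * (l + x * r i) else 0) +
          P4 x a b * ((if b = c then x * ∑ d, Bd i b d else 0) - Bd i b c) + P4 x a b * y := by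
        intro b
        by_cases hb : b = c <;> simp [conA, hb] <;> ring
      have eR : ∀ b, (l * (if i = i ∧ a = b then 1 else 0) -
          conA k m Bd Boff C N true (Sum.inl (i, a)) (Sum.inl (i, b)) +
          x * (if i = i ∧ a = b then r i + ∑ d, Bd i a d else 0) + y * 1) * P4 x b c =
          (if a = b then P4 x b c * (l + x * r i) else 0) +
          ((if a = b then x * ∑ d, Bd i a d else 0) - Bd i a b) * P4 x b c + y * P4 x b c := by
        intro b
        by_cases hb : a = b <;> simp [conA, hb] <;> ring
      rw [Finset.sum_congr rfl fun b _ => eL b, Finset.sum_congr rfl fun b _ => eR b]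
      simp only [Finset.sum_add_distrib, e, ← Finset.sum_mul, ← Finset.mul_sum, P4_row_sum,
        P4_col_sum, Finset.sum_ite_eq, Finset.sum_ite_eq', Finset.mem_univ, if_true]
      ring
    · have e := P4_mul_off_transpose x (hBoff _ _ h) a c
      simp only [conA, Matrix.of_apply, h.ne', h.not_gt, false_and, if_true, if_false, mul_zero, zero_sub,
        add_zero, mul_add, add_mul, mul_neg, neg_mul, Finset.sum_add_distrib,
        Finset.sum_neg_distrib, Bool.false_eq_true]
      rw [e, ← Finset.sum_mul, ← Finset.mul_sum, P4_row_sum, P4_col_sum]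
      ring
  · rw [bigP_mul_inl, mul_bigP_inr]
    simp only [Matrix.add_apply, Matrix.sub_apply, Matrix.smul_apply, Matrix.one_apply,
      Matrix.diagonal_apply, Matrix.of_apply, reduceCtorEq, if_false, smul_eq_mul, conA]
    simp only [hN' i v']
    rw [← Finset.sum_mul, P4_row_sum, one_mul]
  · rw [bigP_mul_inr, mul_bigP_inl]
    simp only [Matrix.add_apply, Matrix.sub_apply, Matrix.smul_apply, Matrix.one_apply,
      Matrix.diagonal_apply, Matrix.of_apply, reduceCtorEq, if_false, smul_eq_mul, conA]
    simp only [hN' j v]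
    rw [← Finset.mul_sum, P4_col_sum]
    simp only [mul_one]
  · rw [bigP_mul_inr, mul_bigP_inr]
    simp [conA, Matrix.one_apply, Matrix.diagonal_apply]
end
end

section
/- Let G₁ and G₂ be the simple graphs on the vertex set {1, …, 9} with edge sets E₁ = {(1,3),(3,4),(4,2),(5,7),(7,8),(8,6),(1,5),(1,7),(3,7),(3,6),(4,5),(4,8),(2,8),(2,6),(5,9),(6,9),(7,9),(8,9)} and E₂ = {(1,3),(3,4),(4,2),(5,7),(7,8),(8,6),(1,5),(1,8),(3,7),(3,5),(4,6),(4,8),(2,7),(2,6),(5,9),(6,9),(7,9),(8,9)}. Then G₁ and G₂ are not isomorphic, yet det(λI − A(G₁) + x·D(G₁) + y·J) = det(λI − A(G₂) + x·D(G₂) + y·J) for all real λ, x, y. -/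
/-!
Both graphs are invariant under the involution `τ = (0 1)(2 3)(4 5)(6 7)`, which fixes `8`. Hence
each of `A`, `D`, `J` preserves the space of `τ`-invariant vectors, and in a basis adapted to this
subspace `l•I - A + x•D + y•J` is block upper triangular (`det_eq_mul`). The `5 × 5` block on the
invariant vectors is given by the quotient matrix of the orbit partition, which is the same for
`G₁` and `G₂`. On the `4`-dimensional quotient `J` vanishes, `D` becomes `diag(3,4,4,5)`, and the
adjacency matrices become two different matrices `T₁`, `T₂`; the identity
`det (l•I - T₁ + x•diag(3,4,4,5)) = det (l•I - T₂ + x•diag(3,4,4,5))` is a direct expansion.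

The graphs are not isomorphic because `{0, 2, 6}` is a triangle of `G₁` containing a vertex of
degree `3` and a vertex of degree `5`, while `G₂` has no such triangle.
-/

open Matrix

noncomputable section
open scoped Classical

/-- The edge list of the first graph (vertices `1, …, 9` of the paper are `0, …, 8` here). -/
def edges1 : List (Fin 9 × Fin 9) :=
  [(0,2),(2,3),(3,1),(4,6),(6,7),(7,5),(0,4),(0,6),(2,6),(2,5),(3,4),(3,7),(1,7),(1,5),
   (4,8),(5,8),(6,8),(7,8)]

/-- The edge list of the second graph. -/
def edges2 : List (Fin 9 × Fin 9) :=
  [(0,2),(2,3),(3,1),(4,6),(6,7),(7,5),(0,4),(0,7),(2,6),(2,4),(3,5),(3,7),(1,6),(1,5),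
   (4,8),(5,8),(6,8),(7,8)]

/-- The first graph `G₁` on `9` vertices. -/
def G1 : SimpleGraph (Fin 9) := SimpleGraph.fromRel fun u v => (u, v) ∈ edges1

/-- The second graph `G₂` on `9` vertices. -/
def G2 : SimpleGraph (Fin 9) := SimpleGraph.fromRel fun u v => (u, v) ∈ edges2

/-- The diagonal matrix of vertex degrees of a finite simple graph. -/
def degMatrix (R : Type*) [Semiring R] {V : Type*} [Fintype V] (G : SimpleGraph V) :
    Matrix V V R :=
  Matrix.diagonal fun v => (G.degree v : R)

/-- The adjacency relation of the simple graph with edge list `E`, as a Boolean function, so that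
finite checks about it can be evaluated (the instances on `G1` and `G2` are classical). -/
def adjB (E : List (Fin 9 × Fin 9)) (u v : Fin 9) : Bool :=
  E.contains (u, v) || E.contains (v, u)

/-- The integral adjacency matrix of the graph with edge list `E`. -/
def adjZ (E : List (Fin 9 × Fin 9)) : Matrix (Fin 9) (Fin 9) ℤ :=
  Matrix.of fun u v => if adjB E u v then 1 else 0

/-- The common degree sequence of `G1` and `G2`. -/
def degs : Fin 9 → ℕ := ![3, 3, 4, 4, 4, 4, 5, 5, 4]

/-- The common integral degree matrix of `G1` and `G2`. -/
def degZ : Matrix (Fin 9) (Fin 9) ℤ := diagonal fun v => (degs v : ℤ)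

/-- The integral all-ones matrix. -/
def onesZ : Matrix (Fin 9) (Fin 9) ℤ := Matrix.of fun _ _ => 1

lemma adj1 (u v : Fin 9) : G1.Adj u v ↔ adjB edges1 u v = true := by
  have h : G1.Adj u v ↔ u ≠ v ∧ ((u, v) ∈ edges1 ∨ (v, u) ∈ edges1) := Iff.rfl
  rw [h]
  clear h
  revert u v
  decide +kernel

lemma adj2 (u v : Fin 9) : G2.Adj u v ↔ adjB edges2 u v = true := by
  have h : G2.Adj u v ↔ u ≠ v ∧ ((u, v) ∈ edges2 ∨ (v, u) ∈ edges2) := Iff.rfl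
  rw [h]
  clear h
  revert u v
  decide +kernel

lemma degree_eq_of_adj {G : SimpleGraph (Fin 9)} {E : List (Fin 9 × Fin 9)}
    (h : ∀ u v, G.Adj u v ↔ adjB E u v = true) (v : Fin 9) :
    G.degree v = (Finset.univ.filter fun w => adjB E v w = true).card := by
  rw [← SimpleGraph.card_neighborFinset_eq_degree]
  congr 1
  ext w
  simp [h]

lemma deg1 (v : Fin 9) : G1.degree v = degs v := by
  rw [degree_eq_of_adj adj1]
  revert v
  decide +kernel

lemma deg2 (v : Fin 9) : G2.degree v = degs v := by
  rw [degree_eq_of_adj adj2]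
  revert v
  decide +kernel

lemma not_iso : ¬ Nonempty (G1 ≃g G2) := by
  rintro ⟨f⟩
  have hd (v : Fin 9) : degs (f v) = degs v := by
    rw [← deg1 v, ← deg2, f.degree_eq]
  have ha (u v : Fin 9) (h : adjB edges1 u v = true) : adjB edges2 (f u) (f v) = true := by
    rw [← adj2, f.map_adj_iff, adj1, h]
  have key : ∀ a b c : Fin 9, degs a = 3 → degs c = 5 → adjB edges2 a b = true →
      adjB edges2 b c = true → adjB edges2 a c = true → False := by decide +kernel
  exact key (f 0) (f 2) (f 6) (hd 0) (hd 6) (ha 0 2 (by decide +kernel))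
    (ha 2 6 (by decide +kernel)) (ha 0 6 (by decide +kernel))

/-- The columns are the indicator vectors of the orbits `{0,1}, {2,3}, {4,5}, {6,7}, {8}` of `τ`;
they form a basis of the `τ`-invariant vectors. -/
def U₁ : Matrix (Fin 9) (Fin 5) ℤ :=
  !![1,0,0,0,0; 1,0,0,0,0; 0,1,0,0,0; 0,1,0,0,0; 0,0,1,0,0; 0,0,1,0,0; 0,0,0,1,0; 0,0,0,1,0;
    0,0,0,0,1]

/-- The columns are the standard basis vectors at `1, 3, 5, 7`. Together with the columns of `U₁`
they form a `ℤ`-basis of `ℤ⁹`, so no denominators appear in the change of basis. -/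
def U₂ : Matrix (Fin 9) (Fin 4) ℤ :=
  !![0,0,0,0; 1,0,0,0; 0,0,0,0; 0,1,0,0; 0,0,0,0; 0,0,1,0; 0,0,0,0; 0,0,0,1; 0,0,0,0]

/-- The coordinate functionals dual to `U₁` in the basis formed by the columns of `U₁`, `U₂`. -/
def V₁ : Matrix (Fin 5) (Fin 9) ℤ :=
  !![1,0,0,0,0,0,0,0,0; 0,0,1,0,0,0,0,0,0; 0,0,0,0,1,0,0,0,0; 0,0,0,0,0,0,1,0,0;
    0,0,0,0,0,0,0,0,1]

/-- The coordinate functionals dual to `U₂` in the basis formed by the columns of `U₁`, `U₂`. -/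
def V₂ : Matrix (Fin 4) (Fin 9) ℤ :=
  !![-1,1,0,0,0,0,0,0,0; 0,0,-1,1,0,0,0,0,0; 0,0,0,0,-1,1,0,0,0; 0,0,0,0,0,0,-1,1,0]

/-- Entrywise cast of an integer matrix to a real matrix. -/
def toR {m n : Type*} (M : Matrix m n ℤ) : Matrix m n ℝ := M.map (Int.castRingHom ℝ)

lemma toR_mul {k m n : Type*} [Fintype m] (M : Matrix k m ℤ) (N : Matrix m n ℤ) :
    toR (M * N) = toR M * toR N := Matrix.map_mul

lemma toR_add {m n : Type*} (M N : Matrix m n ℤ) : toR (M + N) = toR M + toR N := by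
  ext; simp [toR]

lemma toR_zero {m n : Type*} : toR (0 : Matrix m n ℤ) = 0 := by
  ext; simp [toR]

lemma toR_one {n : Type*} [DecidableEq n] : toR (1 : Matrix n n ℤ) = 1 := by
  ext i j
  by_cases h : i = j <;> simp [toR, Matrix.one_apply, h]

/-- A matrix that maps the span of the columns of `U₁` into itself is block upper triangular in the
basis given by the columns of `U₁` and `U₂`. -/
lemma det_eq_mul (M : Matrix (Fin 9) (Fin 9) ℝ) (h : toR V₂ * M * toR U₁ = 0) :
    M.det = (toR V₁ * M * toR U₁).det * (toR V₂ * M * toR U₂).det := by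
  have hVU : fromRows (toR V₁) (toR V₂) * fromCols (toR U₁) (toR U₂) = 1 := by
    rw [fromRows_mul_fromCols, ← toR_mul, ← toR_mul, ← toR_mul, ← toR_mul,
      show V₁ * U₁ = 1 by decide +kernel, show V₁ * U₂ = 0 by decide +kernel,
      show V₂ * U₁ = 0 by decide +kernel, show V₂ * U₂ = 1 by decide +kernel,
      toR_zero, toR_zero, toR_one, toR_one, fromBlocks_one]
  have hUV : fromCols (toR U₁) (toR U₂) * fromRows (toR V₁) (toR V₂) = 1 := by
    rw [fromCols_mul_fromRows, ← toR_mul, ← toR_mul, ← toR_add,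
      show U₁ * V₁ + U₂ * V₂ = 1 by decide +kernel, toR_one]
  rw [← det_conj_of_mul_eq_one (N := M) hVU hUV, fromRows_mul, fromRows_mul_fromCols, h,
    det_fromBlocks_zero₂₁]

/-- The matrix `l•I - A + x•D + y•J` for an integral adjacency matrix `A` and the degree
sequence `degs`. -/
def gen (A : Matrix (Fin 9) (Fin 9) ℤ) (l x y : ℝ) : Matrix (Fin 9) (Fin 9) ℝ :=
  l • toR 1 - toR A + x • toR degZ + y • toR onesZ

/-- Compressing `gen A l x y` by integral matrices reduces to compressing its integral
coefficients. -/
lemma mul_gen_mul {m n : Type*} (V : Matrix m (Fin 9) ℤ) (U : Matrix (Fin 9) n ℤ)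
    (A : Matrix (Fin 9) (Fin 9) ℤ) (l x y : ℝ) :
    toR V * gen A l x y * toR U =
      l • toR (V * U) - toR (V * A * U) + x • toR (V * degZ * U) +
        y • toR (V * onesZ * U) := by
  simp only [gen, toR_mul, toR_one, Matrix.mul_add, Matrix.mul_sub, Matrix.add_mul,
    Matrix.sub_mul, Matrix.mul_smul, Matrix.smul_mul, Matrix.mul_one]

/-- The factorization of the determinant when the vectors invariant under `τ` are preserved by `A`,
and `A` acts on the quotient by the matrix `T`. -/
lemma det_gen (A : Matrix (Fin 9) (Fin 9) ℤ) (T : Matrix (Fin 4) (Fin 4) ℤ)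
    (h₀ : V₂ * A * U₁ = 0) (hT : V₂ * A * U₂ = T) (l x y : ℝ) :
    (gen A l x y).det = (toR V₁ * gen A l x y * toR U₁).det *
      (l • (1 : Matrix (Fin 4) (Fin 4) ℝ) - toR T + x • toR (diagonal ![3, 4, 4, 5])).det := by
  rw [det_eq_mul, mul_gen_mul V₂ U₂, hT, show V₂ * U₂ = 1 by decide +kernel,
    show V₂ * degZ * U₂ = diagonal ![3, 4, 4, 5] by decide +kernel,
    show V₂ * onesZ * U₂ = 0 by decide +kernel, toR_zero, toR_one, smul_zero, add_zero]
  rw [mul_gen_mul, h₀, show V₂ * U₁ = 0 by decide +kernel,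
    show V₂ * degZ * U₁ = 0 by decide +kernel,
    show V₂ * onesZ * U₁ = 0 by decide +kernel]
  simp [toR_zero]

/-- The action of the adjacency matrix of `G1` modulo the `τ`-invariant vectors. -/
def T₁ : Matrix (Fin 4) (Fin 4) ℤ := !![0,1,1,1; 1,-1,-1,1; 1,-1,0,1; 1,1,1,-1]

/-- The action of the adjacency matrix of `G2` modulo the `τ`-invariant vectors. -/
def T₂ : Matrix (Fin 4) (Fin 4) ℤ := !![0,1,1,-1; 1,-1,1,1; 1,1,0,1; -1,1,1,-1]

lemma det_quotient_eq (l x : ℝ) :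
    (l • (1 : Matrix (Fin 4) (Fin 4) ℝ) - toR T₁ + x • toR (diagonal ![3, 4, 4, 5])).det =
      (l • (1 : Matrix (Fin 4) (Fin 4) ℝ) - toR T₂ + x • toR (diagonal ![3, 4, 4, 5])).det := by
  have h₁ : l • (1 : Matrix (Fin 4) (Fin 4) ℝ) - toR T₁ + x • toR (diagonal ![3, 4, 4, 5]) =
      !![l + 3 * x, -1, -1, -1; -1, l + 1 + 4 * x, 1, -1; -1, 1, l + 4 * x, -1;
        -1, -1, -1, l + 1 + 5 * x] := by
    ext i j
    fin_cases i <;> fin_cases j <;> simp [toR, T₁] <;> ring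
  have h₂ : l • (1 : Matrix (Fin 4) (Fin 4) ℝ) - toR T₂ + x • toR (diagonal ![3, 4, 4, 5]) =
      !![l + 3 * x, -1, -1, 1; -1, l + 1 + 4 * x, -1, -1; -1, -1, l + 4 * x, -1;
        1, -1, -1, l + 1 + 5 * x] := by
    ext i j
    fin_cases i <;> fin_cases j <;> simp [toR, T₂] <;> ring
  rw [h₁, h₂]
  simp [det_succ_row_zero, Fin.sum_univ_succ, Fin.succAbove]
  ring

lemma eq_gen {G : SimpleGraph (Fin 9)} {E : List (Fin 9 × Fin 9)}
    (h : ∀ u v, G.Adj u v ↔ adjB E u v = true) (hd : ∀ v, G.degree v = degs v) (l x y : ℝ) :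
    l • (1 : Matrix (Fin 9) (Fin 9) ℝ) - G.adjMatrix ℝ + x • degMatrix ℝ G +
      y • (Matrix.of fun _ _ => (1 : ℝ)) = gen (adjZ E) l x y := by
  have hA : G.adjMatrix ℝ = toR (adjZ E) := by
    ext u v
    by_cases huv : adjB E u v = true <;> simp [toR, adjZ, SimpleGraph.adjMatrix_apply, h, huv]
  have hD : degMatrix ℝ G = toR degZ := by
    ext u v
    by_cases huv : u = v <;> simp [toR, degMatrix, degZ, hd, huv]
  have hJ : (Matrix.of fun _ _ => (1 : ℝ)) = toR onesZ := by
    ext u v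
    simp [toR, onesZ]
  rw [gen, hA, hD, hJ, toR_one]

/-- The graphs `G₁` and `G₂` are not isomorphic, yet they have the same
generalized characteristic polynomial `det (l•I - A + x•D + y•J)`. -/
theorem stmt_16 :
    (¬ Nonempty (G1 ≃g G2)) ∧
    ∀ l x y : ℝ,
      (l • (1 : Matrix (Fin 9) (Fin 9) ℝ) - G1.adjMatrix ℝ + x • degMatrix ℝ G1 +
        y • (Matrix.of fun _ _ => (1 : ℝ))).det =
      (l • (1 : Matrix (Fin 9) (Fin 9) ℝ) - G2.adjMatrix ℝ + x • degMatrix ℝ G2 +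
        y • (Matrix.of fun _ _ => (1 : ℝ))).det := by
  refine ⟨not_iso, fun l x y => ?_⟩
  rw [eq_gen adj1 deg1, eq_gen adj2 deg2,
    det_gen (adjZ edges1) T₁ (by decide +kernel) (by decide +kernel),
    det_gen (adjZ edges2) T₂ (by decide +kernel) (by decide +kernel), det_quotient_eq,
    mul_gen_mul, mul_gen_mul,
    -- the quotient matrices of the two orbit partitions coincide
    show V₁ * adjZ edges1 * U₁ = V₁ * adjZ edges2 * U₁ by decide +kernel]
end
end

section
/- Let G₁ and G₂ be the simple graphs on the vertex set {1, …, 9} with edge sets E₁ = {(1,3),(3,4),(4,2),(5,7),(7,8),(8,6),(1,5),(1,7),(3,7),(3,6),(4,5),(4,8),(2,8),(2,6),(5,9),(6,9),(7,9),(8,9)} and E₂ = {(1,3),(3,4),(4,2),(5,7),(7,8),(8,6),(1,5),(1,8),(3,7),(3,5),(4,6),(4,8),(2,7),(2,6),(5,9),(6,9),(7,9),(8,9)}. Then there is no invertible 9×9 real matrix P such that P·(A(G₂) + x·D(G₂)) = (A(G₁) + x·D(G₁))·P for all real x; equivalently, there is no invertible real matrix P with P·A(G₂) = A(G₁)·P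 and P·D(G₂) = D(G₁)·P. -/
/-!
Simultaneous similarity preserves the trace of every word in the two matrices, so it suffices to
find a word `w` for which `tr w(A(G₁), D(G₁)) ≠ tr w(A(G₂), D(G₂))`. The word `A³D²` does it:
`tr (A³D²) = ∑ v, deg(v)² · #{closed 3-walks at v}`, which is twice the sum over triangles of the
squared degrees of their corners. The two values, evaluated over `ℤ`, are different
(`traceInt_ne`). The identity for all real `x` reduces to the two separate
intertwining relations by comparing `x = 0` with `x = 1`.
-/

open Matrix

noncomputable section
open scoped Classical

/-- The integer adjacency matrix of the graph with edge list `l`; unlike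
`SimpleGraph.adjMatrix`, its entries are evaluated by the kernel. -/
def adjInt (l : List (Fin 9 × Fin 9)) (i j : Fin 9) : ℤ :=
  if (i, j) ∈ l ∨ (j, i) ∈ l then 1 else 0

/-- The `i`-th row sum of `adjInt l`, i.e. the degree of the vertex `i`. -/
def degInt (l : List (Fin 9 × Fin 9)) (i : Fin 9) : ℤ := ∑ j, adjInt l i j

/-- The trace of `A³D²`, expanded over closed `3`-walks. -/
def traceInt (l : List (Fin 9 × Fin 9)) : ℤ :=
  ∑ i, (∑ k, (∑ j, adjInt l i j * adjInt l j k) * adjInt l k i) * (degInt l i * degInt l i)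

theorem traceInt_ne : traceInt edges1 ≠ traceInt edges2 := by decide +kernel

theorem adj_iff {l : List (Fin 9 × Fin 9)} (hl : ∀ i : Fin 9, (i, i) ∉ l)
    {G : SimpleGraph (Fin 9)} (hG : G = SimpleGraph.fromRel fun u v => (u, v) ∈ l)
    (i j : Fin 9) : G.Adj i j ↔ (i, j) ∈ l ∨ (j, i) ∈ l := by
  subst hG
  rw [SimpleGraph.fromRel_adj]
  refine ⟨And.right, fun h => ⟨?_, h⟩⟩
  rintro rfl
  exact hl i (or_self_iff.mp h)

theorem adjMatrix_eq {l : List (Fin 9 × Fin 9)} (hl : ∀ i : Fin 9, (i, i) ∉ l)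
    {G : SimpleGraph (Fin 9)} (hG : G = SimpleGraph.fromRel fun u v => (u, v) ∈ l)
    [DecidableRel G.Adj] :
    G.adjMatrix ℝ = Matrix.of fun i j => (adjInt l i j : ℝ) := by
  ext i j
  simp [SimpleGraph.adjMatrix_apply, adjInt, adj_iff hl hG]

theorem degree_eq {l : List (Fin 9 × Fin 9)} (hl : ∀ i : Fin 9, (i, i) ∉ l)
    {G : SimpleGraph (Fin 9)} (hG : G = SimpleGraph.fromRel fun u v => (u, v) ∈ l)
    (i : Fin 9) [Fintype (G.neighborSet i)] : (G.degree i : ℝ) = degInt l i := by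
  have h := SimpleGraph.adjMatrix_mulVec_const_apply (α := ℝ) (G := G) (a := 1) (v := i)
  rw [adjMatrix_eq hl hG, mul_one] at h
  -- `congr!` identifies the two `Fintype` instances on the neighbour set used by `degree`.
  trans (((Matrix.of fun i j => (adjInt l i j : ℝ)) *ᵥ Function.const (Fin 9) 1) i)
  · rw [h]
    congr!
  · simp [degInt, Matrix.mulVec, dotProduct]

theorem degMatrix_eq {l : List (Fin 9 × Fin 9)} (hl : ∀ i : Fin 9, (i, i) ∉ l)
    {G : SimpleGraph (Fin 9)} (hG : G = SimpleGraph.fromRel fun u v => (u, v) ∈ l) :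
    degMatrix ℝ G = Matrix.diagonal fun i => (degInt l i : ℝ) := by
  ext i j
  simp only [degMatrix, Matrix.diagonal, Matrix.of_apply, degree_eq hl hG]

theorem trace_eq {l : List (Fin 9 × Fin 9)} (hl : ∀ i : Fin 9, (i, i) ∉ l)
    {G : SimpleGraph (Fin 9)} (hG : G = SimpleGraph.fromRel fun u v => (u, v) ∈ l)
    [DecidableRel G.Adj] :
    (G.adjMatrix ℝ * G.adjMatrix ℝ * G.adjMatrix ℝ * (degMatrix ℝ G * degMatrix ℝ G)).trace =
      (traceInt l : ℝ) := by
  rw [adjMatrix_eq hl hG, degMatrix_eq hl hG, Matrix.diagonal_mul_diagonal]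
  simp only [Matrix.trace, Matrix.diag_apply, Matrix.mul_diagonal]
  simp only [Matrix.mul_apply, Matrix.of_apply, traceInt]
  push_cast
  rfl

theorem no_simultaneous_similarity (P : Matrix (Fin 9) (Fin 9) ℝ) (hP : IsUnit P)
    (hA : P * G2.adjMatrix ℝ = G1.adjMatrix ℝ * P)
    (hD : P * degMatrix ℝ G2 = degMatrix ℝ G1 * P) : False := by
  obtain ⟨U, rfl⟩ := hP
  -- `SemiconjBy U` is closed under products, so `U` intertwines the two words `A³D²`.
  have hA' : SemiconjBy (U : Matrix (Fin 9) (Fin 9) ℝ) (G2.adjMatrix ℝ) (G1.adjMatrix ℝ) := hA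
  have hD' : SemiconjBy (U : Matrix (Fin 9) (Fin 9) ℝ) (degMatrix ℝ G2) (degMatrix ℝ G1) := hD
  have hW := ((hA'.mul_right hA').mul_right hA').mul_right (hD'.mul_right hD')
  have ht := Matrix.trace_units_conj U
    (G2.adjMatrix ℝ * G2.adjMatrix ℝ * G2.adjMatrix ℝ * (degMatrix ℝ G2 * degMatrix ℝ G2))
  rw [hW.eq, Units.mul_inv_cancel_right, trace_eq (l := edges1) (G := G1) (by decide) rfl,
    trace_eq (l := edges2) (G := G2) (by decide) rfl] at ht
  exact traceInt_ne (by exact_mod_cast ht)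

/-- There is no invertible real matrix `P` with
`P • (A(G₂) + x • D(G₂)) = (A(G₁) + x • D(G₁)) • P` for all real `x`; equivalently, no
invertible `P` with `P • A(G₂) = A(G₁) • P` and `P • D(G₂) = D(G₁) • P`. -/
theorem stmt_17 :
    (¬ ∃ P : Matrix (Fin 9) (Fin 9) ℝ, IsUnit P ∧ ∀ x : ℝ,
        P * (G2.adjMatrix ℝ + x • degMatrix ℝ G2) =
          (G1.adjMatrix ℝ + x • degMatrix ℝ G1) * P) ∧
    (¬ ∃ P : Matrix (Fin 9) (Fin 9) ℝ, IsUnit P ∧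
        P * G2.adjMatrix ℝ = G1.adjMatrix ℝ * P ∧
        P * degMatrix ℝ G2 = degMatrix ℝ G1 * P) := by
  refine ⟨?_, fun ⟨P, hP, hA, hD⟩ => no_simultaneous_similarity P hP hA hD⟩
  rintro ⟨P, hP, h⟩
  have h0 : P * G2.adjMatrix ℝ = G1.adjMatrix ℝ * P := by simpa using h 0
  have h1 := h 1
  rw [one_smul, one_smul, mul_add, add_mul, h0] at h1
  exact no_simultaneous_similarity P hP h0 (add_left_cancel h1)
end
end

section
/- Let G₁ and G₂ be the simple graphs on the vertex set {0, 1, …, 11} with edge sets E₁ = {(0,6),(0,10),(1,7),(1,10),(2,8),(2,11),(3,9),(3,10),(4,9),(4,11),(5,9),(5,11),(6,10),(7,11),(8,11),(9,10)} and E₂ = {(0,6),(0,9),(0,10),(1,7),(1,11),(2,8),(2,11),(3,9),(3,11),(4,10),(4,11),(5,10),(5,11),(6,9),(7,11),(8,11)}. Then: (a) G₁ and G₂ are both connected and have minimum degree at least 2; (b) det(I − t·A(G₁) + t²·(D(G₁) − I)) = det(I − t·A(G₂) + t²·(D(G₂) − I)) for all real t; and (c) the degree multiset of G₁ is {5,5,4,2,2,2,2,2,2,2,2,2}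 while that of G₂ is {7,3,3,3,2,2,2,2,2,2,2,2}, so in particular G₁ and G₂ are not isomorphic. -/
/-!
The degrees and the adjacency relations are finite data, checked by evaluation; connectedness
follows from explicit spanning trees rooted at the vertex `11`, encoded by parent maps.

For the determinant identity, the vertices `0, …, 5` form an independent set in both graphs, so
the corresponding block of `I - tA + t²(D - I)` is diagonal, with positive entries `1 + t²` or
`1 + 2t²`. Eliminating it by a Schur complement (`det_schur_diagonal`) leaves a matrix indexed by
`6, …, 11`, in which the block of `6, 7, 8` is again diagonal, with entries
`1 + t² - t²/(1 + t²) > 0` or `1 + t² - t²/(1 + 2t²) > 0`. Eliminating that block too leaves a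
`3 × 3` determinant for each graph, and the two results agree as rational functions of `t`. As all
the pivots are nonzero for every real `t`, this proves the identity for every real `t`.

The graphs are not isomorphic because only `GB` has a vertex of degree `7`.
-/

open Matrix

noncomputable section
open scoped Classical

/-- The edge list of the first graph on the vertices `0, …, 11` ("the crab"). -/
def edgesA : List (Fin 12 × Fin 12) :=
  [(0,6),(0,10),(1,7),(1,10),(2,8),(2,11),(3,9),(3,10),(4,9),(4,11),(5,9),(5,11),
   (6,10),(7,11),(8,11),(9,10)]

/-- The edge list of the second graph on the vertices `0, …, 11` ("the squid"). -/
def edgesB : List (Fin 12 × Fin 12) :=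
  [(0,6),(0,9),(0,10),(1,7),(1,11),(2,8),(2,11),(3,9),(3,11),(4,10),(4,11),(5,10),
   (5,11),(6,9),(7,11),(8,11)]

/-- The first graph `G₁` on `12` vertices. -/
def GA : SimpleGraph (Fin 12) := SimpleGraph.fromRel fun u v => (u, v) ∈ edgesA

/-- The second graph `G₂` on `12` vertices. -/
def GB : SimpleGraph (Fin 12) := SimpleGraph.fromRel fun u v => (u, v) ∈ edgesB

/-- The degrees of `GA` in the order of the vertices. -/
def degA : Fin 12 → ℕ := ![2, 2, 2, 2, 2, 2, 2, 2, 2, 4, 5, 5]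

/-- The degrees of `GB` in the order of the vertices. -/
def degB : Fin 12 → ℕ := ![3, 2, 2, 2, 2, 2, 2, 2, 2, 3, 3, 7]

lemma adjA (u v : Fin 12) :
    GA.Adj u v ↔ u ≠ v ∧ ((u, v) ∈ edgesA ∨ (v, u) ∈ edgesA) := Iff.rfl

lemma adjB_s18 (u v : Fin 12) :
    GB.Adj u v ↔ u ≠ v ∧ ((u, v) ∈ edgesB ∨ (v, u) ∈ edgesB) := Iff.rfl

/-- The degree computed with an arbitrary decision procedure for adjacency, so that the count can
be evaluated although the degrees in the theorem use classical decidability. -/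
lemma degree_eq_card {G : SimpleGraph (Fin 12)} (p : Fin 12 → Fin 12 → Prop)
    [∀ u v, Decidable (p u v)] (h : ∀ u v, G.Adj u v ↔ p u v) (v : Fin 12) :
    G.degree v = (Finset.univ.filter fun w => p v w).card := by
  rw [← SimpleGraph.card_neighborFinset_eq_degree]
  congr 1
  ext w
  simp [h]

lemma degree_GA (v : Fin 12) : GA.degree v = degA v := by
  rw [degree_eq_card _ adjA]
  revert v
  decide

lemma degree_GB (v : Fin 12) : GB.degree v = degB v := by
  rw [degree_eq_card _ adjB_s18]
  revert v
  decide

/-- A graph is connected if some parent map leads from every vertex to the root in `n` steps. -/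
lemma connected_of_parent {V : Type*} {G : SimpleGraph V} (r : V) (p : V → V) (n : ℕ)
    (hp : ∀ v, v = p v ∨ G.Adj v (p v)) (hr : ∀ v, p^[n] v = r) : G.Connected := by
  have key : ∀ (k : ℕ) (v : V), G.Reachable v (p^[k] v) := by
    intro k
    induction k with
    | zero => exact fun v => SimpleGraph.Reachable.refl v
    | succ k ih =>
      intro v
      rw [Function.iterate_succ_apply]
      refine SimpleGraph.Reachable.trans ?_ (ih (p v))
      rcases hp v with h | h
      · rw [← h]
      · exact h.reachable
  rw [SimpleGraph.connected_iff_exists_forall_reachable]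
  exact ⟨r, fun v => ((hr v) ▸ key n v).symm⟩

lemma connected_GA : GA.Connected := by
  refine connected_of_parent 11 ![10, 7, 11, 9, 11, 11, 10, 11, 11, 4, 1, 11] 4 ?_ (by decide)
  simp only [adjA]
  decide

lemma connected_GB : GB.Connected := by
  refine connected_of_parent 11 ![9, 11, 11, 11, 11, 11, 9, 11, 11, 3, 4, 11] 4 ?_ (by decide)
  simp only [adjB_s18]
  decide

/-- Schur complement with respect to a leading diagonal block with nonzero entries. -/
lemma det_schur_diagonal {m n : ℕ} (M : Matrix (Fin (m + n)) (Fin (m + n)) ℝ) (p : Fin m → ℝ)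
    (hp : ∀ i, p i ≠ 0)
    (hM : ∀ i j, M (Fin.castAdd n i) (Fin.castAdd n j) = if i = j then p i else 0) :
    M.det = (∏ i, p i) * (Matrix.of fun i j : Fin n => M (Fin.natAdd m i) (Fin.natAdd m j) -
      ∑ k : Fin m, M (Fin.natAdd m i) (Fin.castAdd n k) * (p k)⁻¹ *
        M (Fin.castAdd n k) (Fin.natAdd m j)).det := by
  set N := M.submatrix (finSumFinEquiv (m := m) (n := n)) finSumFinEquiv with hN
  have h11 : N.toBlocks₁₁ = Matrix.diagonal p := by
    ext i j
    simp [hN, Matrix.toBlocks₁₁, hM, Matrix.diagonal_apply]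
  have hinv : Matrix.diagonal p * Matrix.diagonal (fun i => (p i)⁻¹) = 1 := by
    rw [Matrix.diagonal_mul_diagonal, ← Matrix.diagonal_one]
    congr 1
    funext i
    exact mul_inv_cancel₀ (hp i)
  let _ : Invertible (Matrix.diagonal p) := ⟨_, mul_eq_one_comm.mp hinv, hinv⟩
  rw [← Matrix.det_submatrix_equiv_self (finSumFinEquiv (m := m) (n := n)) M, ← hN,
    ← Matrix.fromBlocks_toBlocks N, h11, Matrix.det_fromBlocks₁₁, Matrix.det_diagonal,
    Matrix.invOf_eq_nonsing_inv, Matrix.inv_eq_right_inv hinv]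
  congr 2
  ext i j
  rw [Matrix.sub_apply, Matrix.mul_apply]
  simp [hN, Matrix.toBlocks₁₂, Matrix.toBlocks₂₁, Matrix.toBlocks₂₂, Matrix.mul_diagonal]

/-- The entries of the matrix in Bass's determinant formula. -/
lemma bass_apply (G : SimpleGraph (Fin 12)) (t : ℝ) (i j : Fin 12) :
    ((1 : Matrix (Fin 12) (Fin 12) ℝ) - t • G.adjMatrix ℝ +
        (t ^ 2) • (degMatrix ℝ G - 1)) i j =
      if i = j then 1 + t ^ 2 * ((G.degree i : ℝ) - 1) else if G.Adj i j then -t else 0 := by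
  by_cases h : i = j
  · subst h
    simp [degMatrix]
  · by_cases hadj : G.Adj i j <;> simp [degMatrix, h, hadj]

/-- The Schur complement of the block `0, …, 5` for `GA`, where `s = t² / (1 + t²)`. -/
def schurA (t s : ℝ) : Matrix (Fin (3 + 3)) (Fin (3 + 3)) ℝ :=
  !![1 + t ^ 2 - s, 0, 0, 0, -t - s, 0;
     0, 1 + t ^ 2 - s, 0, 0, -s, -t;
     0, 0, 1 + t ^ 2 - s, 0, 0, -t - s;
     0, 0, 0, 1 + 3 * t ^ 2 - 3 * s, -t - s, -2 * s;
     -t - s, -s, 0, -t - s, 1 + 4 * t ^ 2 - 3 * s, 0;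
     0, -t, -t - s, -2 * s, 0, 1 + 4 * t ^ 2 - 3 * s]

/-- The Schur complement of the block `0, …, 5` for `GB`, where `s = t² / (1 + t²)` and
`r = t² / (1 + 2t²)`. -/
def schurB (t s r : ℝ) : Matrix (Fin (3 + 3)) (Fin (3 + 3)) ℝ :=
  !![1 + t ^ 2 - r, 0, 0, -t - r, -r, 0;
     0, 1 + t ^ 2 - s, 0, 0, 0, -t - s;
     0, 0, 1 + t ^ 2 - s, 0, 0, -t - s;
     -t - r, 0, 0, 1 + 2 * t ^ 2 - r - s, -r, -s;
     -r, 0, 0, -r, 1 + 2 * t ^ 2 - r - 2 * s, -2 * s;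
     0, -t - s, -t - s, -s, -2 * s, 1 + 6 * t ^ 2 - 5 * s]

lemma castAdd_six (i : Fin 6) : Fin.castAdd 6 i = (![0, 1, 2, 3, 4, 5] : Fin 6 → Fin 12) i := by
  revert i
  decide

lemma natAdd_six (i : Fin 6) : Fin.natAdd 6 i = (![6, 7, 8, 9, 10, 11] : Fin 6 → Fin 12) i := by
  revert i
  decide

lemma det_GA (t : ℝ) :
    ((1 : Matrix (Fin 12) (Fin 12) ℝ) - t • GA.adjMatrix ℝ +
        (t ^ 2) • (degMatrix ℝ GA - 1)).det =
      (1 + t ^ 2) ^ 6 * (schurA t (t ^ 2 / (1 + t ^ 2))).det := by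
  have hd : 1 + t ^ 2 ≠ 0 := by positivity
  rw [det_schur_diagonal (m := 6) (n := 6) _ (fun _ => 1 + t ^ 2) (fun _ => hd)]
  · simp only [Finset.prod_const, Finset.card_univ, Fintype.card_fin]
    congr 2
    ext i j
    simp only [Matrix.of_apply, bass_apply, degree_GA, adjA, natAdd_six, castAdd_six]
    fin_cases i <;> fin_cases j <;>
      simp [Fin.sum_univ_six, edgesA, degA, schurA] <;> (try field_simp) <;> (try ring)
  · intro i j
    simp only [bass_apply, degree_GA, adjA]
    fin_cases i <;> fin_cases j <;> simp [edgesA, degA, Fin.ext_iff] <;> ring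

lemma det_GB (t : ℝ) :
    ((1 : Matrix (Fin 12) (Fin 12) ℝ) - t • GB.adjMatrix ℝ +
        (t ^ 2) • (degMatrix ℝ GB - 1)).det =
      (1 + 2 * t ^ 2) * (1 + t ^ 2) ^ 5 *
        (schurB t (t ^ 2 / (1 + t ^ 2)) (t ^ 2 / (1 + 2 * t ^ 2))).det := by
  have hd : 1 + t ^ 2 ≠ 0 := by positivity
  have he : 1 + 2 * t ^ 2 ≠ 0 := by positivity
  rw [det_schur_diagonal (m := 6) (n := 6) _
    ![1 + 2 * t ^ 2, 1 + t ^ 2, 1 + t ^ 2, 1 + t ^ 2, 1 + t ^ 2, 1 + t ^ 2]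
    (by intro i; fin_cases i <;> assumption)]
  · congr 1
    · simp [Fin.prod_univ_six]
      ring
    congr 1
    ext i j
    simp only [Matrix.of_apply, bass_apply, degree_GB, adjB_s18, natAdd_six, castAdd_six]
    fin_cases i <;> fin_cases j <;>
      simp [Fin.sum_univ_six, edgesB, degB, schurB] <;> (try field_simp) <;> (try ring)
  · intro i j
    simp only [bass_apply, degree_GB, adjB_s18]
    fin_cases i <;> fin_cases j <;> simp [edgesB, degB, Fin.ext_iff] <;> ring

/-- Elimination of the vertices `6, 7, 8` from both Schur complements: the two determinants agree. -/
lemma det_schur_eq (t : ℝ) :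
    (1 + t ^ 2) ^ 6 * (schurA t (t ^ 2 / (1 + t ^ 2))).det =
      (1 + 2 * t ^ 2) * (1 + t ^ 2) ^ 5 *
        (schurB t (t ^ 2 / (1 + t ^ 2)) (t ^ 2 / (1 + 2 * t ^ 2))).det := by
  have hd : 1 + t ^ 2 ≠ 0 := by positivity
  have he : 1 + 2 * t ^ 2 ≠ 0 := by positivity
  have hu : 1 + t ^ 2 + t ^ 4 ≠ 0 := by positivity
  have hv : 1 + 2 * t ^ 2 + 2 * t ^ 4 ≠ 0 := by positivity
  have hs : 1 + t ^ 2 - t ^ 2 / (1 + t ^ 2) = (1 + t ^ 2 + t ^ 4) / (1 + t ^ 2) := by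
    field_simp
    ring
  have hr : 1 + t ^ 2 - t ^ 2 / (1 + 2 * t ^ 2) =
      (1 + 2 * t ^ 2 + 2 * t ^ 4) / (1 + 2 * t ^ 2) := by
    field_simp
    ring
  rw [det_schur_diagonal (schurA _ _) (fun _ => (1 + t ^ 2 + t ^ 4) / (1 + t ^ 2))
      (fun _ => div_ne_zero hu hd),
    det_schur_diagonal (schurB _ _ _) ![(1 + 2 * t ^ 2 + 2 * t ^ 4) / (1 + 2 * t ^ 2),
      (1 + t ^ 2 + t ^ 4) / (1 + t ^ 2), (1 + t ^ 2 + t ^ 4) / (1 + t ^ 2)]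
      (by
        intro i
        fin_cases i
        exacts [div_ne_zero hv he, div_ne_zero hu hd, div_ne_zero hu hd])]
  · rw [Matrix.det_fin_three, Matrix.det_fin_three]
    simp [Fin.sum_univ_succ, Fin.prod_univ_succ, schurA, schurB, Fin.natAdd, Fin.castAdd]
    field_simp
    ring
  · intro i j
    fin_cases i <;> fin_cases j <;> simp [schurB, hs, hr]
  · intro i j
    fin_cases i <;> fin_cases j <;> simp [schurA, hs]

/-- (a) `G₁` and `G₂` are connected with minimum degree at least `2`;
(b) `det (I - t•A + t²•(D - I))` agrees for `G₁` and `G₂` for all real `t` (so, by Bass's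
formula, they have equal Ihara zeta functions); and (c) their degree multisets are
`{5,5,4,2,…,2}` and `{7,3,3,3,2,…,2}` respectively, so they are not isomorphic. -/
theorem stmt_18 :
    (GA.Connected ∧ GB.Connected ∧ (∀ v, 2 ≤ GA.degree v) ∧ (∀ v, 2 ≤ GB.degree v)) ∧
    (∀ t : ℝ,
      ((1 : Matrix (Fin 12) (Fin 12) ℝ) - t • GA.adjMatrix ℝ +
        (t ^ 2) • (degMatrix ℝ GA - 1)).det =
      ((1 : Matrix (Fin 12) (Fin 12) ℝ) - t • GB.adjMatrix ℝ +
        (t ^ 2) • (degMatrix ℝ GB - 1)).det) ∧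
    (Multiset.map (fun v => GA.degree v) Finset.univ.val =
        (↑([5,5,4,2,2,2,2,2,2,2,2,2] : List ℕ) : Multiset ℕ) ∧
      Multiset.map (fun v => GB.degree v) Finset.univ.val =
        (↑([7,3,3,3,2,2,2,2,2,2,2,2] : List ℕ) : Multiset ℕ) ∧
      ¬ Nonempty (GA ≃g GB)) := by
  refine ⟨⟨connected_GA, connected_GB, ?_, ?_⟩, fun t => ?_, ?_, ?_, ?_⟩
  · simp only [degree_GA]
    decide
  · simp only [degree_GB]
    decide
  · rw [det_GA, det_GB, det_schur_eq]
  · simp only [degree_GA]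
    decide
  · simp only [degree_GB]
    decide
  · rintro ⟨f⟩
    have h : GA.degree (f.symm 11) = 7 := by
      rw [f.symm.degree_eq, degree_GB]
      rfl
    rw [degree_GA] at h
    have h7 : ∀ v, degA v ≠ 7 := by decide
    exact h7 _ h
end
end
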